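/- Let N ≥ 1 and s ∈ (0,1) with N > 2s, let x ∈ ℝ^N, let ψ : ℝ^N → ℝ be smooth with compact support, and let c ≥ 1. Then there exists C > 0, depending only on N, s, c, x, ψ, such that for every map Φ : ℝ^N → ℝ^N satisfying c⁻¹|u−v| ≤ |Φ(u) − Φ(v)| ≤ c|u−v| for all u, v ∈ ℝ^N, the double integral ∬_{ℝ^N×ℝ^N} ( |Φ(x) − Φ(y)|^{2s−N} − |Φ(x) − Φ(z)|^{2s−N} ) · (ψ(y) − ψ(z)) · |y−z|^{−N−2s} dy dz is absolutely convergent and its absolute value is at most C. -/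

import Mathlib

/-!
Write `d` for the dimension and `u y = dist (Φ x) (Φ y) ^ (-α)`, with energy kernel
`‖y - z‖ ^ (-(d + β))`; the classical exponents are `α = d - 2s` and `β = 2s`. For `0 ≤ θ ≤ 1` the
bi-Lipschitz bounds give the weighted Hölder estimate
`|u y - u z| ≤ C ‖y - z‖ ^ θ (‖y - x‖ ^ (-(α + θ)) + ‖z - x‖ ^ (-(α + θ)))`
with `C` independent of `Φ`. Hence the energy density of `u` and `ψ` is dominated by a multiple of
`‖z - x‖ ^ (-a) ‖ψ y - ψ z‖ ‖y - z‖ ^ (-b)`, where `a = α + θ` and `b = d + β - θ`, plus its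
reflection in `y` and `z`.

For `a < d < b < d + 1` and `a + b > d` this kernel is integrable. While `z` stays in a ball around
`x`, it is bounded by the integrable function `‖z - x‖ ^ (-a)` of `z` times the integrable function
`min (L ‖h‖) (2M) ‖h‖ ^ (-b)` of `h = y - z`. When `z` is far from `x`, only the `y` in the support
of `ψ` contribute, and there `‖y - z‖` is comparable to `‖z - x‖`, so that the decay is
`‖z - x‖ ^ (-(a + b))`. Some `θ` makes all exponents admissible because `0 < α < d`, `0 < β < 2`
and `α + β < d + 1`.
-/

open MeasureTheory

noncomputable section

open Metric Module
open scoped NNReal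

section RealPowers

lemma one_sub_rpow_le_max_mul {t : ℝ} (ht : 0 < t) (ht1 : t ≤ 1) (α : ℝ) :
    1 - t ^ α ≤ max 1 α * (1 - t) := by
  rcases le_total 1 α with hα | hα
  · have bernoulli := one_add_mul_self_le_rpow_one_add (s := t - 1) (by linarith) hα
    rw [add_sub_cancel] at bernoulli
    rw [max_eq_right hα]
    linarith
  · have := Real.rpow_le_rpow_of_exponent_ge ht ht1 hα
    rw [Real.rpow_one] at this
    rw [max_eq_left hα]
    linarith

lemma one_sub_div_le_rpow_mul_rpow_neg {a b θ : ℝ} (ha : 0 < a) (hab : a ≤ b) (hθ : 0 ≤ θ)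
    (hθ1 : θ ≤ 1) : 1 - a / b ≤ (b - a) ^ θ * a ^ (-θ) := by
  have hb : 0 < b := ha.trans_le hab
  have ht : 0 < a / b := div_pos ha hb
  have ht1 : a / b ≤ 1 := (div_le_one hb).2 hab
  calc 1 - a / b ≤ (1 - a / b) ^ θ :=
        Real.self_le_rpow_of_le_one (by linarith) (by linarith) hθ1
    _ ≤ ((b - a) / a) ^ θ := by
        refine Real.rpow_le_rpow (by linarith) ?_ hθ
        rw [one_sub_div hb.ne']
        exact div_le_div_of_nonneg_left (by linarith) ha hab
    _ = (b - a) ^ θ * a ^ (-θ) := by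
        rw [Real.div_rpow (by linarith) ha.le, Real.rpow_neg ha.le, div_eq_mul_inv]

lemma rpow_neg_sub_rpow_neg_le {a b θ : ℝ} (ha : 0 < a) (hab : a ≤ b) (α : ℝ) (hθ : 0 ≤ θ)
    (hθ1 : θ ≤ 1) :
    a ^ (-α) - b ^ (-α) ≤ max 1 α * (b - a) ^ θ * a ^ (-(α + θ)) := by
  have hb : 0 < b := ha.trans_le hab
  have factor : a ^ (-α) - b ^ (-α) = a ^ (-α) * (1 - (a / b) ^ α) := by
    rw [mul_sub, mul_one, Real.div_rpow ha.le hb.le, Real.rpow_neg ha.le, Real.rpow_neg hb.le]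
    field_simp
  calc a ^ (-α) - b ^ (-α) = a ^ (-α) * (1 - (a / b) ^ α) := factor
    _ ≤ a ^ (-α) * (max 1 α * (1 - a / b)) := by
        gcongr
        exact one_sub_rpow_le_max_mul (div_pos ha hb) ((div_le_one hb).2 hab) α
    _ ≤ a ^ (-α) * (max 1 α * ((b - a) ^ θ * a ^ (-θ))) := by
        gcongr
        exact one_sub_div_le_rpow_mul_rpow_neg ha hab hθ hθ1
    _ = max 1 α * (b - a) ^ θ * a ^ (-(α + θ)) := by
        rw [neg_add, Real.rpow_add ha]
        ring

/-- At `a = 0` or `b = 0` the convention `0 ^ (-α) = 0` applies. -/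
lemma abs_rpow_neg_sub_rpow_neg_le {a b α θ : ℝ} (ha : 0 ≤ a) (hb : 0 ≤ b) (hα : 0 < α)
    (hθ : 0 ≤ θ) (hθ1 : θ ≤ 1) :
    |a ^ (-α) - b ^ (-α)| ≤
      max 1 α * |a - b| ^ θ * (a ^ (-(α + θ)) + b ^ (-(α + θ))) := by
  wlog hab : a ≤ b generalizing a b
  · rw [abs_sub_comm, abs_sub_comm a b, add_comm (a ^ _)]
    exact this hb ha (le_of_not_ge hab)
  rcases ha.eq_or_lt with rfl | ha
  · rcases hb.eq_or_lt with rfl | hb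
    · rw [sub_self, abs_zero]
      positivity
    · have hsplit : b ^ (-α) = b ^ θ * b ^ (-(α + θ)) := by
        rw [← Real.rpow_add hb]
        congr 1
        ring
      rw [Real.zero_rpow (by linarith), Real.zero_rpow (by linarith), zero_sub, zero_sub,
        abs_neg, abs_neg, zero_add, abs_of_pos hb, abs_of_nonneg (by positivity), hsplit, mul_assoc]
      exact le_mul_of_one_le_left (by positivity) (le_max_left 1 α)
  · have hpow : b ^ (-α) ≤ a ^ (-α) := Real.rpow_le_rpow_of_nonpos ha hab (by linarith)
    rw [abs_of_nonneg (by linarith), abs_sub_comm, abs_of_nonneg (by linarith)]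
    refine (rpow_neg_sub_rpow_neg_le ha hab α hθ hθ1).trans ?_
    have := sub_nonneg.2 hab
    gcongr
    exact le_add_of_nonneg_right (by positivity)

lemma rpow_neg_le_rpow_mul_rpow_neg {a d K γ : ℝ} (hd : 0 < d) (hK : 0 < K) (h : d ≤ K * a)
    (hγ : 0 ≤ γ) : a ^ (-γ) ≤ K ^ γ * d ^ (-γ) :=
  calc a ^ (-γ) ≤ (d / K) ^ (-γ) :=
        Real.rpow_le_rpow_of_nonpos (by positivity) ((div_le_iff₀' hK).2 h) (by linarith)
    _ = K ^ γ * d ^ (-γ) := by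
        rw [Real.div_rpow hd.le hK.le, Real.rpow_neg hK.le, div_inv_eq_mul, mul_comm]

end RealPowers

section BiLipschitz

variable {X Y : Type*} [PseudoMetricSpace X] [PseudoMetricSpace Y] {Φ : Y → X} {A L : ℝ≥0}

lemma dist_rpow_neg_le (hA : AntilipschitzWith A Φ) (hL : LipschitzWith L Φ) {γ : ℝ} (hγ : 0 < γ)
    (x y : Y) : dist (Φ x) (Φ y) ^ (-γ) ≤ (A : ℝ) ^ γ * dist x y ^ (-γ) := by
  rcases (dist_nonneg (x := x) (y := y)).eq_or_lt with hxy | hxy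
  · have : dist (Φ x) (Φ y) = 0 :=
      le_antisymm (by simpa [← hxy] using hL.dist_le_mul x y) dist_nonneg
    rw [this, Real.zero_rpow (by linarith)]
    positivity
  · have hle := hA.le_mul_dist x y
    have hA0 : 0 < (A : ℝ) := pos_of_mul_pos_left (hxy.trans_le hle) dist_nonneg
    exact rpow_neg_le_rpow_mul_rpow_neg hxy hA0 hle hγ.le

lemma abs_dist_rpow_neg_sub_le (hA : AntilipschitzWith A Φ) (hL : LipschitzWith L Φ)
    {α θ : ℝ} (hα : 0 < α) (hθ : 0 ≤ θ) (hθ1 : θ ≤ 1) (x y z : Y) :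
    |dist (Φ x) (Φ y) ^ (-α) - dist (Φ x) (Φ z) ^ (-α)| ≤
      max 1 α * L ^ θ * A ^ (α + θ) * dist y z ^ θ *
        (dist x y ^ (-(α + θ)) + dist x z ^ (-(α + θ))) := by
  have increment : |dist (Φ x) (Φ y) - dist (Φ x) (Φ z)| ≤ L * dist y z := by
    rw [dist_comm (Φ x), dist_comm (Φ x)]
    exact (abs_dist_sub_le _ _ _).trans (hL.dist_le_mul y z)
  calc |dist (Φ x) (Φ y) ^ (-α) - dist (Φ x) (Φ z) ^ (-α)|
      ≤ max 1 α * |dist (Φ x) (Φ y) - dist (Φ x) (Φ z)| ^ θ *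
          (dist (Φ x) (Φ y) ^ (-(α + θ)) + dist (Φ x) (Φ z) ^ (-(α + θ))) :=
        abs_rpow_neg_sub_rpow_neg_le dist_nonneg dist_nonneg hα hθ hθ1
    _ ≤ max 1 α * (L * dist y z) ^ θ *
          (A ^ (α + θ) * dist x y ^ (-(α + θ)) + A ^ (α + θ) * dist x z ^ (-(α + θ))) := by
        gcongr <;> exact dist_rpow_neg_le hA hL (by linarith) _ _
    _ = _ := by
        rw [Real.mul_rpow L.coe_nonneg dist_nonneg]
        ring

end BiLipschitz

section Densities

variable {E V : Type*}

/-- The increments of `ψ` against the kernel `‖y - z‖ ^ (-b)`, with the second variable weighted by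
a power singularity at `x`. It dominates energy densities of functions that are singular at `x`. -/
def weightedIncrement [SeminormedAddCommGroup E] [SeminormedAddCommGroup V]
    (ψ : E → V) (x : E) (a b : ℝ) (p : E × E) : ℝ :=
  ‖p.2 - x‖ ^ (-a) * (‖ψ p.1 - ψ p.2‖ * ‖p.1 - p.2‖ ^ (-b))

section WeightedIncrement

variable [SeminormedAddCommGroup E] [SeminormedAddCommGroup V] {ψ : E → V} {x : E} {a b M r : ℝ}

lemma weightedIncrement_nonneg (p : E × E) : 0 ≤ weightedIncrement ψ x a b p := by
  unfold weightedIncrement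
  positivity

lemma weightedIncrement_le_of_support_subset_ball (hM : ∀ y, ‖ψ y‖ ≤ M)
    (hsupp : Function.support ψ ⊆ ball x r) (hb : 0 ≤ b) {y z : E} (hz : z ∉ ball x (2 * r))
    (hr : 0 < r) :
    weightedIncrement ψ x a b (y, z) ≤
      (ball x r).indicator (fun _ => M) y * (2 ^ b * ‖z - x‖ ^ (-(a + b))) := by
  replace hz : 2 * r ≤ ‖z - x‖ := by simpa [dist_eq_norm] using hz
  have vanish : ∀ w, r ≤ ‖w - x‖ → ψ w = 0 := fun w hw => by
    by_contra h
    exact hw.not_gt (mem_ball_iff_norm.1 (hsupp h))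
  have hψz : ψ z = 0 := vanish z (by linarith)
  by_cases hy : y ∈ ball x r
  · have hzx : 0 < ‖z - x‖ := by linarith
    have comparable : ‖z - x‖ ≤ 2 * ‖y - z‖ := by
      have := norm_sub_le_norm_sub_add_norm_sub z y x
      rw [norm_sub_rev z y] at this
      linarith [mem_ball_iff_norm.1 hy]
    rw [Set.indicator_of_mem hy, weightedIncrement, hψz, sub_zero]
    calc ‖z - x‖ ^ (-a) * (‖ψ y‖ * ‖y - z‖ ^ (-b))
        ≤ ‖z - x‖ ^ (-a) * (M * (2 ^ b * ‖z - x‖ ^ (-b))) := by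
          gcongr
          · exact (norm_nonneg _).trans (hM y)
          · exact hM y
          · exact rpow_neg_le_rpow_mul_rpow_neg hzx two_pos comparable hb
      _ = M * (2 ^ b * ‖z - x‖ ^ (-(a + b))) := by
          rw [neg_add, Real.rpow_add hzx]
          ring
  · have hψy : ψ y = 0 := vanish y (by simpa [dist_eq_norm] using hy)
    simp [weightedIncrement, hψy, hψz, hy]

end WeightedIncrement

variable [NormedAddCommGroup E] [NormedSpace ℝ E]

/-- The density of the Dirichlet form of the fractional Laplacian of order `β`, up to its
normalizing constant; in terms of the Sobolev exponent `s` one has `β = 2s`. -/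
def energyDensity (u ψ : E → ℝ) (β : ℝ) (p : E × E) : ℝ :=
  (u p.1 - u p.2) * (ψ p.1 - ψ p.2) * ‖p.1 - p.2‖ ^ (-(finrank ℝ E + β))

lemma abs_energyDensity_le {u ψ : E → ℝ} {x : E} {a C β θ : ℝ}
    (hu : ∀ y z, |u y - u z| ≤ C * ‖y - z‖ ^ θ * (‖y - x‖ ^ (-a) + ‖z - x‖ ^ (-a)))
    (p : E × E) :
    |energyDensity u ψ β p| ≤ C * (weightedIncrement ψ x a (finrank ℝ E + β - θ) p +
      weightedIncrement ψ x a (finrank ℝ E + β - θ) p.swap) := by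
  obtain ⟨y, z⟩ := p
  rcases eq_or_ne y z with rfl | hyz
  · simp [energyDensity, weightedIncrement]
  have hpos : 0 < ‖y - z‖ := norm_sub_pos_iff.2 hyz
  have hsplit : ‖y - z‖ ^ (-(finrank ℝ E + β - θ)) =
      ‖y - z‖ ^ θ * ‖y - z‖ ^ (-(finrank ℝ E + β)) := by
    rw [← Real.rpow_add hpos]
    congr 1
    ring
  calc |energyDensity u ψ β (y, z)|
      = |u y - u z| * |ψ y - ψ z| * ‖y - z‖ ^ (-(finrank ℝ E + β)) := by
        rw [energyDensity, abs_mul, abs_mul, abs_of_nonneg (a := ‖y - z‖ ^ _) (by positivity)]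
    _ ≤ C * ‖y - z‖ ^ θ * (‖y - x‖ ^ (-a) + ‖z - x‖ ^ (-a)) * |ψ y - ψ z| *
          ‖y - z‖ ^ (-(finrank ℝ E + β)) := by
        gcongr
        exact hu y z
    _ = _ := by
        simp only [weightedIncrement, Prod.fst_swap, Prod.snd_swap, norm_sub_rev z y,
          norm_sub_rev (ψ z), Real.norm_eq_abs, hsplit]
        ring

end Densities

section FiniteDimensional

variable {E V : Type*} [NormedAddCommGroup E] [NormedSpace ℝ E] [FiniteDimensional ℝ E]
  [MeasurableSpace E] [BorelSpace E] [SeminormedAddCommGroup V]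

section NormPowers

variable (μ : Measure E) [μ.IsAddHaarMeasure]

lemma integrableOn_ball_norm_rpow_neg [Nontrivial E] {a : ℝ} (ha : a < finrank ℝ E) (r : ℝ) :
    IntegrableOn (fun h : E => ‖h‖ ^ (-a)) (ball 0 r) μ := by
  refine integrableOn_ball_of_norm_le_rpow (C := 1) (α := a) finrank_pos ha
    (.of_forall fun h => ?_) (Measurable.aestronglyMeasurable (by fun_prop))
  rw [Real.norm_of_nonneg (by positivity), one_mul]

lemma integrableOn_compl_ball_norm_rpow_neg {b r : ℝ} (hb : finrank ℝ E < b) (hr : 0 < r) :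
    IntegrableOn (fun h : E => ‖h‖ ^ (-b)) (ball 0 r)ᶜ μ := by
  have hb0 : 0 < b := (Nat.cast_nonneg _).trans_lt hb
  refine ((integrable_one_add_norm (μ := μ) hb).const_mul
    ((1 + r⁻¹) ^ b)).integrableOn.mono' (Measurable.aestronglyMeasurable (by fun_prop)) ?_
  refine ae_restrict_of_forall_mem measurableSet_ball.compl fun h hh => ?_
  replace hh : r ≤ ‖h‖ := by simpa using hh
  rw [Real.norm_of_nonneg (by positivity)]
  refine rpow_neg_le_rpow_mul_rpow_neg (by positivity) (by positivity) ?_ hb0.le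
  have : 1 ≤ r⁻¹ * ‖h‖ := by rwa [← div_eq_inv_mul, one_le_div hr]
  linarith

lemma integrable_min_mul_norm_rpow_neg [Nontrivial E] {b L M : ℝ} (hb : finrank ℝ E < b)
    (hb1 : b < finrank ℝ E + 1) (hL : 0 ≤ L) (hM : 0 ≤ M) :
    Integrable (fun h : E => min (L * ‖h‖) M * ‖h‖ ^ (-b)) μ := by
  have hmeas : Measurable fun h : E => min (L * ‖h‖) M * ‖h‖ ^ (-b) := by fun_prop
  rw [← integrableOn_univ, ← Set.union_compl_self (ball (0 : E) 1), integrableOn_union]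
  constructor
  · refine ((integrableOn_ball_norm_rpow_neg μ (a := b - 1) (by linarith) 1).const_mul L).mono'
      hmeas.aestronglyMeasurable (.of_forall fun h => ?_)
    rw [Real.norm_of_nonneg (by positivity)]
    rcases (norm_nonneg h).eq_or_lt with h0 | h0
    · rw [← h0, mul_zero, min_eq_left hM, zero_mul]
      positivity
    · calc min (L * ‖h‖) M * ‖h‖ ^ (-b) ≤ L * ‖h‖ * ‖h‖ ^ (-b) := by
            gcongr
            exact min_le_left _ _
        _ = L * ‖h‖ ^ (-(b - 1)) := by
            rw [mul_assoc, neg_sub, sub_eq_add_neg, Real.rpow_add h0, Real.rpow_one]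
  · refine ((integrableOn_compl_ball_norm_rpow_neg μ hb one_pos).const_mul M).mono'
      hmeas.aestronglyMeasurable (.of_forall fun h => ?_)
    rw [Real.norm_of_nonneg (by positivity)]
    gcongr
    exact min_le_right _ _

end NormPowers

section WeightedIncrement

variable {ψ : E → V} {x : E} {a b M r : ℝ}

lemma measurable_weightedIncrement (hψ : Continuous ψ) :
    Measurable (weightedIncrement ψ x a b) := by
  have : Measurable fun p : E × E => ‖ψ p.1 - ψ p.2‖ := by
    exact Continuous.measurable (by fun_prop)
  unfold weightedIncrement
  fun_prop

variable (μ : Measure E) [μ.IsAddHaarMeasure]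

lemma integrableOn_weightedIncrement_near [Nontrivial E] {L : ℝ≥0} (hL : LipschitzWith L ψ)
    (hM : ∀ y, ‖ψ y‖ ≤ M) (ha : a < finrank ℝ E) (hb : finrank ℝ E < b)
    (hb1 : b < finrank ℝ E + 1) :
    IntegrableOn (weightedIncrement ψ x a b) (Prod.snd ⁻¹' ball x r) (μ.prod μ) := by
  have hM0 : 0 ≤ M := (norm_nonneg _).trans (hM 0)
  have weight : Integrable (fun z => (ball (0 : E) r).indicator (‖·‖ ^ (-a)) (z - x)) μ :=
    ((integrableOn_ball_norm_rpow_neg μ ha r).integrable_indicator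
      measurableSet_ball).comp_sub_right x
  have increment := integrable_min_mul_norm_rpow_neg μ hb hb1 L.coe_nonneg
    (mul_nonneg zero_le_two hM0)
  refine (weight.convolution_integrand (ContinuousLinearMap.mul ℝ ℝ) increment).integrableOn.mono'
    (measurable_weightedIncrement hL.continuous).aestronglyMeasurable
    (ae_restrict_of_forall_mem (measurable_snd measurableSet_ball) fun ⟨y, z⟩ hz => ?_)
  have hmin : ‖ψ y - ψ z‖ ≤ min (L * ‖y - z‖) (2 * M) :=
    le_min (hL.norm_sub_le y z) ((norm_sub_le _ _).trans (by linarith [hM y, hM z]))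
  rw [Real.norm_of_nonneg (weightedIncrement_nonneg _), ContinuousLinearMap.mul_apply',
    Set.indicator_of_mem (by simpa [dist_eq_norm] using hz), weightedIncrement]
  gcongr

lemma integrableOn_weightedIncrement_far (hψ : Continuous ψ) (hM : ∀ y, ‖ψ y‖ ≤ M)
    (hsupp : Function.support ψ ⊆ ball x r) (hr : 0 < r) (hb : 0 ≤ b)
    (hab : finrank ℝ E < a + b) :
    IntegrableOn (weightedIncrement ψ x a b) (Prod.snd ⁻¹' ball x (2 * r))ᶜ (μ.prod μ) := by
  have bump : Integrable ((ball x r).indicator fun _ => M) μ :=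
    (integrableOn_const measure_ball_lt_top.ne).integrable_indicator measurableSet_ball
  have tail : Integrable
      (fun z => (ball (0 : E) (2 * r))ᶜ.indicator (‖·‖ ^ (-(a + b))) (z - x)) μ :=
    ((integrableOn_compl_ball_norm_rpow_neg μ hab (by positivity)).integrable_indicator
      measurableSet_ball.compl).comp_sub_right x
  refine (bump.mul_prod (tail.const_mul (2 ^ b))).integrableOn.mono'
    (measurable_weightedIncrement hψ).aestronglyMeasurable
    (ae_restrict_of_forall_mem (measurable_snd measurableSet_ball).compl fun ⟨y, z⟩ hz => ?_)
  have hzx : z - x ∈ (ball (0 : E) (2 * r))ᶜ := by simpa [dist_eq_norm] using hz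
  rw [Real.norm_of_nonneg (weightedIncrement_nonneg _), Set.indicator_of_mem hzx]
  exact weightedIncrement_le_of_support_subset_ball hM hsupp hb hz hr

theorem integrable_weightedIncrement [Nontrivial E] {L : ℝ≥0} (hL : LipschitzWith L ψ)
    (hψ : HasCompactSupport ψ) (x : E) (ha : a < finrank ℝ E) (hb : finrank ℝ E < b)
    (hb1 : b < finrank ℝ E + 1) (hab : finrank ℝ E < a + b) :
    Integrable (weightedIncrement ψ x a b) (μ.prod μ) := by
  obtain ⟨M, hM⟩ := hψ.exists_bound_of_continuous hL.continuous
  obtain ⟨r, hr, hsupp⟩ := hψ.isCompact.isBounded.subset_ball_lt 0 x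
  rw [← integrableOn_univ, ← Set.union_compl_self (Prod.snd ⁻¹' ball x (2 * r)),
    integrableOn_union]
  exact ⟨integrableOn_weightedIncrement_near μ hL hM ha hb hb1,
    integrableOn_weightedIncrement_far μ hL.continuous hM ((subset_tsupport ψ).trans hsupp) hr
      ((Nat.cast_nonneg _).trans hb.le) hab⟩

end WeightedIncrement

lemma integrable_energyDensity_and_abs_integral_le {u ψ : E → ℝ} {x : E} {a C β θ : ℝ}
    (μ : Measure E) [SFinite μ] (hum : Measurable u) (hψm : Measurable ψ)
    (hu : ∀ y z, |u y - u z| ≤ C * ‖y - z‖ ^ θ * (‖y - x‖ ^ (-a) + ‖z - x‖ ^ (-a)))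
    (hint : Integrable (weightedIncrement ψ x a (finrank ℝ E + β - θ)) (μ.prod μ)) :
    Integrable (energyDensity u ψ β) (μ.prod μ) ∧
      |∫ p, energyDensity u ψ β p ∂μ.prod μ| ≤
        C * (2 * ∫ p, weightedIncrement ψ x a (finrank ℝ E + β - θ) p ∂μ.prod μ) := by
  have hmeas : Measurable (energyDensity u ψ β) := by
    unfold energyDensity
    fun_prop
  set k := weightedIncrement ψ x a (finrank ℝ E + β - θ)
  have hswap : Integrable (fun p => k p.swap) (μ.prod μ) := hint.swap
  have hmaj : Integrable (fun p => C * (k p + k p.swap)) (μ.prod μ) :=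
    (hint.add hswap).const_mul C
  have hle := ae_of_all (μ.prod μ) (abs_energyDensity_le (ψ := ψ) (β := β) hu)
  refine ⟨hmaj.mono' hmeas.aestronglyMeasurable hle, ?_⟩
  rw [← Real.norm_eq_abs]
  refine (norm_integral_le_of_norm_le hmaj hle).trans_eq ?_
  rw [integral_const_mul, integral_add hint hswap, integral_prod_swap, two_mul]

theorem statement16_general {X : Type*} [PseudoMetricSpace X] (μ : Measure E) [μ.IsAddHaarMeasure]
    {α β : ℝ} (hα : α ∈ Set.Ioo 0 (finrank ℝ E : ℝ)) (hβ : β ∈ Set.Ioo (0 : ℝ) 2)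
    (hαβ : α + β < finrank ℝ E + 1) (x : E) {ψ : E → ℝ} {K : ℝ≥0} (hψ : LipschitzWith K ψ)
    (hψc : HasCompactSupport ψ) (A L : ℝ≥0) :
    ∃ C > 0, ∀ Φ : E → X, AntilipschitzWith A Φ → LipschitzWith L Φ →
      Integrable (energyDensity (fun y => dist (Φ x) (Φ y) ^ (-α)) ψ β) (μ.prod μ) ∧
      |∫ p, energyDensity (fun y => dist (Φ x) (Φ y) ^ (-α)) ψ β p ∂μ.prod μ| ≤ C := by
  obtain ⟨hα0, hαd⟩ := hα
  obtain ⟨hβ0, hβ2⟩ := hβ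
  have : Nontrivial E := nontrivial_of_finrank_pos (R := ℝ) (by exact_mod_cast hα0.trans hαd)
  obtain ⟨θ, hlower, hupper⟩ :
      ∃ θ, max 0 (β - 1) < θ ∧ θ < min 1 (min (finrank ℝ E - α) β) := by
    refine exists_between (max_lt (lt_min ?_ (lt_min ?_ ?_)) (lt_min ?_ (lt_min ?_ ?_))) <;>
      linarith
  obtain ⟨hθ0, hβθ⟩ := max_lt_iff.1 hlower
  obtain ⟨hθ1, hθα, hθβ⟩ := by simpa only [lt_min_iff] using hupper
  have hint := integrable_weightedIncrement μ (a := α + θ) (b := finrank ℝ E + β - θ) hψ hψc x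
    (by linarith) (by linarith) (by linarith) (by linarith)
  set B : ℝ := max 1 α * L ^ θ * A ^ (α + θ) *
    (2 * ∫ p, weightedIncrement ψ x (α + θ) (finrank ℝ E + β - θ) p ∂μ.prod μ)
  refine ⟨max 1 B, lt_max_of_lt_left one_pos, fun Φ hA hL => ?_⟩
  have hu : Continuous fun y => dist (Φ x) (Φ y) := continuous_const.dist hL.continuous
  refine (integrable_energyDensity_and_abs_integral_le μ (hu.measurable.pow_const _)
    hψ.continuous.measurable (fun y z => ?_) hint).imp_right (le_max_of_le_right ·)
  simpa only [dist_eq_norm' x, dist_eq_norm y] using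
    abs_dist_rpow_neg_sub_le hA hL hα0 hθ0.le hθ1.le x y z

end FiniteDimensional

/-- There is a constant `C`, depending only on `N, s, c, x, ψ`, bounding
the pairing of `|Φ(x)-Φ(·)|^{2s-N}` with `ψ` in the fractional energy, uniformly over all
`c`-bi-Lipschitz maps `Φ`. -/
theorem statement16 (N : ℕ) (hN : 1 ≤ N) (s : ℝ) (hs : s ∈ Set.Ioo (0 : ℝ) 1)
    (hNs : 2 * s < N) (x : EuclideanSpace ℝ (Fin N))
    (ψ : EuclideanSpace ℝ (Fin N) → ℝ) (hψ : ContDiff ℝ (⊤ : ℕ∞) ψ)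
    (hψc : HasCompactSupport ψ) (c : ℝ) (hc : 1 ≤ c) :
    ∃ C > 0, ∀ Φ : EuclideanSpace ℝ (Fin N) → EuclideanSpace ℝ (Fin N),
      (∀ u v, c⁻¹ * ‖u - v‖ ≤ ‖Φ u - Φ v‖) →
      (∀ u v, ‖Φ u - Φ v‖ ≤ c * ‖u - v‖) →
      Integrable (fun p : EuclideanSpace ℝ (Fin N) × EuclideanSpace ℝ (Fin N) =>
        (‖Φ x - Φ p.1‖ ^ (2 * s - (N : ℝ)) - ‖Φ x - Φ p.2‖ ^ (2 * s - (N : ℝ))) *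
          (ψ p.1 - ψ p.2) * ‖p.1 - p.2‖ ^ (-(N : ℝ) - 2 * s)) ∧
      |∫ p : EuclideanSpace ℝ (Fin N) × EuclideanSpace ℝ (Fin N),
        (‖Φ x - Φ p.1‖ ^ (2 * s - (N : ℝ)) - ‖Φ x - Φ p.2‖ ^ (2 * s - (N : ℝ))) *
          (ψ p.1 - ψ p.2) * ‖p.1 - p.2‖ ^ (-(N : ℝ) - 2 * s)| ≤ C := by
  obtain ⟨K, hK⟩ := hψ.lipschitzWith_of_hasCompactSupport hψc (by simp)
  lift c to ℝ≥0 using zero_le_one.trans hc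
  obtain ⟨C, hC, h⟩ := statement16_general (X := EuclideanSpace ℝ (Fin N)) volume
    (α := N - 2 * s) (β := 2 * s) (by simpa using ⟨hNs, hs.1⟩) (by simpa using hs) (by simp) x hK
    hψc c c
  refine ⟨C, hC, fun Φ hlower hupper => ?_⟩
  have hA : AntilipschitzWith c Φ := AntilipschitzWith.of_le_mul_dist fun u v => by
    simpa [dist_eq_norm] using (inv_mul_le_iff₀ (by positivity)).1 (hlower u v)
  have hL : LipschitzWith c Φ := LipschitzWith.of_dist_le_mul fun u v => by
    simpa [dist_eq_norm] using hupper u v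
  simpa +unfoldPartialApp only [energyDensity, dist_eq_norm, finrank_euclideanSpace_fin, neg_sub,
    neg_add', Measure.volume_eq_prod] using h Φ hA hL
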